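/- arXiv:2305.13350 — 5 statements merged into one kernel-verified Lean document; each statement's English description precedes it below -/
import Mathlib

section
/- Let p > 0 and let m be an integer with m > p + 1. Let f : ℝ → ℂ be m times continuously differentiable with f^{(n)} ∈ L¹(ℝ) for every 0 ≤ n ≤ m, and suppose also that x ↦ x·f(x) is in L¹(ℝ). Let F = 𝓕f and define the fractional derivative f^{(p)}(x) = (1/(2π)) ∫_ℝ (iω)^p F(ω) e^{iωx} dω. Then this integral converges absolutely for every x, f^{(p)} is continuous and integrable on ℝ, and its Fourier transform satisfies 𝓕(f^{(p)})(ω) = (iω)^p F(ω) for all real ω. -/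
open MeasureTheory Real

section FracAux
open Set Filter Topology

lemma frac_kern_int {s : ℝ} (h0 : 0 < s) (h1 : s < 1) :
    IntegrableOn (fun t : ℝ => min 1 t * t ^ (-1 - s)) (Ioi 0) := by
  rw [← Ioc_union_Ioi_eq_Ioi (zero_le_one (α := ℝ))]
  apply IntegrableOn.union
  · have : IntegrableOn (fun t : ℝ => t ^ (-s)) (Ioc 0 1) := by
      rw [← intervalIntegrable_iff_integrableOn_Ioc_of_le zero_le_one]
      exact intervalIntegral.intervalIntegrable_rpow' (by linarith)
    refine this.congr_fun ?_ measurableSet_Ioc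
    intro t ht
    simp only
    rw [min_eq_right ht.2]
    nth_rewrite 2 [← Real.rpow_one t]
    rw [← Real.rpow_add ht.1]
    congr 1; ring
  · have : IntegrableOn (fun t : ℝ => t ^ (-1 - s)) (Ioi 1) :=
      integrableOn_Ioi_rpow_of_lt (by linarith) one_pos
    refine this.congr_fun ?_ measurableSet_Ioi
    intro t ht
    simp only
    rw [min_eq_left (le_of_lt ht), one_mul]

lemma frac_exp_bd {w : ℂ} (hw : 0 ≤ w.re) {C : ℝ} (hC : ‖w‖ ≤ C) {t : ℝ} (ht : 0 < t) :
    ‖1 - Complex.exp (-(w * t))‖ ≤ 2 * (1 + C) * min 1 t := by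
  have hC0 : 0 ≤ C := (norm_nonneg _).trans hC
  have e1 : ‖Complex.exp (-(w * t))‖ ≤ 1 := by
    rw [Complex.norm_exp, Real.exp_le_one_iff]
    simp
    positivity
  have e2 : ‖1 - Complex.exp (-(w * t))‖ ≤ 2 := by
    refine (norm_sub_le _ _).trans ?_
    simp only [norm_one]; linarith
  have hn : ‖-(w * t)‖ = ‖w‖ * t := by
    rw [norm_neg, norm_mul, Complex.norm_real, Real.norm_of_nonneg ht.le]
  have e3 : ‖1 - Complex.exp (-(w * t))‖ ≤ 2 * (‖w‖ * t) := by
    by_cases h : ‖-(w * t)‖ ≤ 1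
    · rw [norm_sub_rev, ← hn]
      exact Complex.norm_exp_sub_one_le h
    · push Not at h
      rw [hn] at h
      linarith
  rcases le_total 1 t with h | h
  · rw [min_eq_left h]; linarith
  · rw [min_eq_right h]
    have := mul_le_mul_of_nonneg_right hC ht.le
    nlinarith

noncomputable def fracK (s : ℝ) (z : ℂ) : ℂ :=
  ∫ t in Ioi (0 : ℝ), (1 - Complex.exp (-(z * t))) * ((t ^ (-1 - s) : ℝ) : ℂ)

lemma frac_meas (s : ℝ) (z : ℂ) : Measurable
    (fun t : ℝ => (1 - Complex.exp (-(z * t))) * ((t ^ (-1 - s) : ℝ) : ℂ)) := by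
  fun_prop

lemma frac_bd {w : ℂ} (hw : 0 ≤ w.re) {C : ℝ} (hC : ‖w‖ ≤ C) (s : ℝ) :
    ∀ᵐ (t : ℝ) ∂(volume.restrict (Ioi (0:ℝ))),
      ‖(1 - Complex.exp (-(w * t))) * ((t ^ (-1 - s) : ℝ) : ℂ)‖ ≤
      2 * (1 + C) * (min 1 t * t ^ (-1 - s)) := by
  refine (ae_restrict_iff' measurableSet_Ioi).2 (ae_of_all _ fun t ht => ?_)
  have ht : 0 < t := ht
  rw [norm_mul, Complex.norm_real, Real.norm_of_nonneg (by positivity), ← mul_assoc]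
  exact mul_le_mul_of_nonneg_right (frac_exp_bd hw hC ht) (by positivity)

lemma frac_int {s : ℝ} (h0 : 0 < s) (h1 : s < 1) {w : ℂ} (hw : 0 ≤ w.re) :
    IntegrableOn (fun t : ℝ => (1 - Complex.exp (-(w * t))) * ((t ^ (-1 - s) : ℝ) : ℂ)) (Ioi 0) :=
  Integrable.mono' ((frac_kern_int h0 h1).const_mul (2 * (1 + ‖w‖)))
    (frac_meas s w).aestronglyMeasurable (frac_bd hw le_rfl s)

lemma fracK_diff {s : ℝ} (h0 : 0 < s) (h1 : s < 1) {z : ℂ} (hz : 0 < z.re) :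
    DifferentiableAt ℂ (fracK s) z := by
  have := hasDerivAt_integral_of_dominated_loc_of_deriv_le
    (μ := volume.restrict (Ioi (0:ℝ))) (𝕜 := ℂ)
    (F := fun (z : ℂ) (t : ℝ) => (1 - Complex.exp (-(z * t))) * ((t ^ (-1 - s) : ℝ) : ℂ))
    (F' := fun (z : ℂ) (t : ℝ) => (t * Complex.exp (-(z * t))) * ((t ^ (-1 - s) : ℝ) : ℂ))
    (x₀ := z) (s := Metric.ball z (z.re / 2))
    (bound := fun t : ℝ => t ^ (-s) * Real.exp (-(z.re / 2) * t))
    (Metric.ball_mem_nhds _ (by positivity))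
    (Eventually.of_forall fun w => (frac_meas s w).aestronglyMeasurable)
    (frac_int h0 h1 hz.le)
    (by
      have : Measurable (fun t : ℝ => (t * Complex.exp (-(z * t))) * ((t ^ (-1 - s) : ℝ) : ℂ)) := by
        fun_prop
      exact this.aestronglyMeasurable)
    ?_ ?_ ?_
  · exact this.2.differentiableAt
  · refine (ae_restrict_iff' measurableSet_Ioi).2 (ae_of_all _ fun t ht w hw => ?_)
    have ht : 0 < t := ht
    have hre : z.re / 2 ≤ w.re := by
      have h3 := (Complex.abs_re_le_norm (w - z)).trans_lt (mem_ball_iff_norm.1 hw)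
      rw [Complex.sub_re] at h3
      have := (abs_lt.1 h3).1
      linarith
    rw [norm_mul, norm_mul, Complex.norm_real, Complex.norm_real, Real.norm_of_nonneg ht.le,
      Real.norm_of_nonneg (by positivity), Complex.norm_exp]
    have : t ^ (-s) = t * t ^ (-1 - s) := by
      nth_rewrite 2 [← Real.rpow_one t]
      rw [← Real.rpow_add ht]
      congr 1; ring
    rw [this]
    have : Real.exp (-(w * t)).re ≤ Real.exp (-(z.re / 2) * t) := by
      apply Real.exp_le_exp.2
      simp
      nlinarith
    calc _ = t * t ^ (-1 - s) * Real.exp (-(w * t)).re := by ring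
      _ ≤ _ := by gcongr
  · have := integrableOn_rpow_mul_exp_neg_mul_rpow (s := -s) (p := 1) (b := z.re / 2)
      (by linarith) one_pos (by positivity)
    simpa [IntegrableOn] using this
  · refine ae_of_all _ fun t w hw => ?_
    have h : HasDerivAt (fun w : ℂ => -(w * t)) (-(1 * t)) w :=
      ((hasDerivAt_id w).mul_const (t : ℂ)).neg
    have h2 := (h.cexp.const_sub 1).mul_const ((t ^ (-1 - s) : ℝ) : ℂ)
    exact h2.congr_deriv (by ring)

lemma fracK_real {s : ℝ} {x : ℝ} (hx : 0 < x) :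
    fracK s x = (x : ℂ) ^ (s : ℂ) * fracK s 1 := by
  have h := integral_comp_mul_left_Ioi
    (fun t : ℝ => (1 - Complex.exp (-((1:ℂ) * t))) * ((t ^ (-1 - s) : ℝ) : ℂ)) 0 hx
  rw [mul_zero] at h
  unfold fracK
  have e : (∫ t in Ioi (0:ℝ), (1 - Complex.exp (-((1:ℂ) * ((x * t : ℝ) : ℂ)))) *
      (((x * t) ^ (-1 - s) : ℝ) : ℂ)) = ((x ^ (-1 - s) : ℝ) : ℂ) * 
      ∫ t in Ioi (0 : ℝ), (1 - Complex.exp (-((x:ℂ) * t))) * ((t ^ (-1 - s) : ℝ) : ℂ) := by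
    rw [← integral_const_mul]
    refine setIntegral_congr_fun measurableSet_Ioi fun t ht => ?_
    have ht : 0 < t := ht
    rw [Real.mul_rpow hx.le ht.le]
    push_cast
    ring_nf
  rw [e] at h
  have hne : ((x ^ (-1 - s) : ℝ) : ℂ) ≠ 0 := by
    exact_mod_cast (Real.rpow_pos_of_pos hx _).ne'
  apply mul_left_cancel₀ hne
  rw [h, ← mul_assoc, ← Complex.ofReal_cpow hx.le, ← Complex.ofReal_mul, ← Real.rpow_add hx,
    Complex.real_smul]
  congr 2
  rw [← Real.rpow_neg_one]
  congr 1; ring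

lemma fracK_rhp {s : ℝ} (h0 : 0 < s) (h1 : s < 1) {z : ℂ} (hz : 0 < z.re) :
    fracK s z = z ^ (s : ℂ) * fracK s 1 := by
  have hopen : IsOpen {z : ℂ | 0 < z.re} := isOpen_lt continuous_const Complex.continuous_re
  have hA : AnalyticOnNhd ℂ (fracK s) {z : ℂ | 0 < z.re} :=
    DifferentiableOn.analyticOnNhd
      (fun w hw => (fracK_diff h0 h1 hw).differentiableWithinAt) hopen
  have hB : AnalyticOnNhd ℂ (fun z => z ^ (s : ℂ) * fracK s 1) {z : ℂ | 0 < z.re} :=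
    DifferentiableOn.analyticOnNhd (fun w hw => by
      apply DifferentiableAt.differentiableWithinAt
      apply DifferentiableAt.mul_const
      exact differentiableAt_id.cpow_const (Or.inl hw)) hopen
  have hpre : IsPreconnected {z : ℂ | 0 < z.re} :=
    (convex_halfSpace_re_gt 0).isPreconnected
  refine hA.eqOn_of_preconnected_of_frequently_eq hB hpre (z₀ := 1) (by simp) ?_ hz
  have ht : Tendsto (fun n : ℕ => (((1 + 1 / ((n:ℝ) + 1) : ℝ)) : ℂ)) atTop (𝓝[≠] 1) := by
    rw [tendsto_nhdsWithin_iff]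
    constructor
    · have := (tendsto_one_div_add_atTop_nhds_zero_nat (𝕜 := ℝ)).const_add 1
      have h2 := (Complex.continuous_ofReal.tendsto _).comp this
      simpa [Function.comp_def] using h2
    · refine Eventually.of_forall fun n => ?_
      have : (0:ℝ) < 1 / ((n:ℝ) + 1) := by positivity
      intro h
      have h : (((1 + 1 / ((n:ℝ) + 1) : ℝ)) : ℂ) = 1 := h
      have h : (1 + 1 / ((n:ℝ) + 1) : ℝ) = 1 := by exact_mod_cast h
      linarith
  exact ht.frequently (Frequently.of_forall fun n => fracK_real (by positivity))

lemma fracK_im {s : ℝ} (h0 : 0 < s) (h1 : s < 1) (ω : ℝ) :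
    fracK s (Complex.I * ω) = (Complex.I * ω) ^ (s : ℂ) * fracK s 1 := by
  by_cases hω : ω = 0
  · subst hω
    have : (s : ℂ) ≠ 0 := by exact_mod_cast h0.ne'
    simp [fracK, Complex.zero_cpow this]
  have hz : Tendsto (fun n : ℕ => Complex.I * ω + ((1 / ((n:ℝ) + 1) : ℝ) : ℂ)) atTop
      (𝓝 (Complex.I * ω)) := by
    have := (Complex.continuous_ofReal.tendsto _).comp
      (tendsto_one_div_add_atTop_nhds_zero_nat (𝕜 := ℝ))
    simpa [Function.comp_def] using this.const_add (Complex.I * ω)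
  have hpos : ∀ n : ℕ, 0 < (Complex.I * ω + ((1 / ((n:ℝ) + 1) : ℝ) : ℂ)).re := by
    intro n
    have : (0:ℝ) < 1 / ((n:ℝ) + 1) := by positivity
    rw [Complex.add_re, Complex.ofReal_re]
    simpa using this
  have L1 : Tendsto (fun n : ℕ => fracK s (Complex.I * ω + ((1 / ((n:ℝ) + 1) : ℝ) : ℂ))) atTop
      (𝓝 (fracK s (Complex.I * ω))) := by
    unfold fracK
    refine tendsto_integral_of_dominated_convergence
      (fun t => 2 * (1 + (|ω| + 1)) * (min 1 t * t ^ (-1 - s)))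
      (fun n => (frac_meas s _).aestronglyMeasurable) ((frac_kern_int h0 h1).const_mul _)
      (fun n => frac_bd (hpos n).le (C := |ω| + 1) ?_ s) ?_
    · refine (norm_add_le _ _).trans ?_
      have : (1:ℝ) / ((n:ℝ) + 1) ≤ 1 := by
        rw [div_le_one (by positivity)]
        have : (0:ℝ) ≤ n := by positivity
        linarith
      rw [norm_mul, Complex.norm_real, Complex.norm_real, Complex.norm_I, one_mul,
        Real.norm_eq_abs, Real.norm_of_nonneg (by positivity)]
      linarith
    · refine ae_of_all _ fun t => ?_
      have hc : Continuous (fun z : ℂ => (1 - Complex.exp (-(z * t))) *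
        ((t ^ (-1 - s) : ℝ) : ℂ)) := by fun_prop
      exact (hc.tendsto _).comp hz
  have L2 : Tendsto (fun n : ℕ => (Complex.I * ω + ((1 / ((n:ℝ) + 1) : ℝ) : ℂ)) ^ (s : ℂ) *
      fracK s 1) atTop (𝓝 ((Complex.I * ω) ^ (s : ℂ) * fracK s 1)) := by
    apply Tendsto.mul_const
    have : ContinuousAt (fun z : ℂ => z ^ (s : ℂ)) (Complex.I * ω) :=
      continuousAt_cpow_const (Or.inr (by simpa using hω))
    exact this.tendsto.comp hz
  refine tendsto_nhds_unique L1 (L2.congr fun n => ?_)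
  exact (fracK_rhp h0 h1 (hpos n)).symm

lemma fracK_one_ne {s : ℝ} (h0 : 0 < s) (h1 : s < 1) : fracK s 1 ≠ 0 := by
  have e : fracK s 1 = ((∫ t in Ioi (0:ℝ), (1 - Real.exp (-t)) * t ^ (-1 - s) : ℝ) : ℂ) := by
    unfold fracK
    rw [← integral_complex_ofReal]
    congr 1 with t
    push_cast
    simp
  rw [e]
  have hi : IntegrableOn (fun t : ℝ => (1 - Real.exp (-t)) * t ^ (-1 - s)) (Ioi 0) := by
    have := (frac_int h0 h1 (w := 1) (by simp)).re
    refine this.congr (ae_of_all _ fun t => ?_)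
    have : (1 - Complex.exp (-((1:ℂ) * t))) * ((t ^ (-1 - s) : ℝ) : ℂ) =
      (((1 - Real.exp (-t)) * t ^ (-1 - s) : ℝ) : ℂ) := by push_cast; simp
    simp only [this]
    exact RCLike.ofReal_re (K := ℂ) _
  have hpos : ∀ t ∈ Ioi (0:ℝ), 0 < (1 - Real.exp (-t)) * t ^ (-1 - s) := by
    intro t ht
    have ht : 0 < t := ht
    have : Real.exp (-t) < 1 := Real.exp_lt_one_iff.2 (by linarith)
    have : 0 < 1 - Real.exp (-t) := by linarith
    positivity
  have : 0 < ∫ t in Ioi (0:ℝ), (1 - Real.exp (-t)) * t ^ (-1 - s) := by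
    rw [setIntegral_pos_iff_support_of_nonneg_ae _ hi]
    · have : Ioi (0:ℝ) ⊆ Function.support (fun t : ℝ => (1 - Real.exp (-t)) * t ^ (-1 - s)) :=
        fun t ht => (hpos t ht).ne'
      rw [inter_eq_right.2 this]
      simp
    · exact (ae_restrict_iff' measurableSet_Ioi).2 (ae_of_all _ fun t ht => (hpos t ht).le)
  exact_mod_cast this.ne'

lemma frac_shift_int {h : ℝ → ℂ} (hi : Integrable h) (t : ℝ) :
    Integrable (fun x => h x - h (x - t)) := hi.sub (hi.comp_sub_right t)

lemma frac_shift_bd {h h' : ℝ → ℂ} (hd : ∀ x, HasDerivAt h (h' x) x) (hc : Continuous h')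
    (hi : Integrable h) (hi' : Integrable h') {t : ℝ} (ht : 0 < t) :
    ∫ x, ‖h x - h (x - t)‖ ≤ (2 * (∫ x, ‖h x‖) + ∫ x, ‖h' x‖) * min 1 t := by
  have A0 : 0 ≤ ∫ x, ‖h x‖ := integral_nonneg fun _ => norm_nonneg _
  have B0 : 0 ≤ ∫ x, ‖h' x‖ := integral_nonneg fun _ => norm_nonneg _
  have b1 : ∫ x, ‖h x - h (x - t)‖ ≤ 2 * ∫ x, ‖h x‖ := by
    calc _ ≤ ∫ x, (‖h x‖ + ‖h (x - t)‖) :=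
          integral_mono (frac_shift_int hi t).norm (hi.norm.add (hi.comp_sub_right t).norm)
            fun x => norm_sub_le _ _
      _ = (∫ x, ‖h x‖) + ∫ x, ‖h (x - t)‖ :=
          integral_add hi.norm (hi.comp_sub_right t).norm
      _ = _ := by
          rw [integral_sub_right_eq_self (fun x => ‖h x‖) t]; ring
  have b2 : ∫ x, ‖h x - h (x - t)‖ ≤ t * ∫ x, ‖h' x‖ := by
    rw [integral_norm_eq_lintegral_enorm (frac_shift_int hi t).1,
      integral_norm_eq_lintegral_enorm hi'.1]
    have : ∫⁻ x, ‖h x - h (x - t)‖ₑ ≤ ENNReal.ofReal t * ∫⁻ x, ‖h' x‖ₑ := by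
      calc _ ≤ ∫⁻ x, ∫⁻ u in Ioc 0 t, ‖h' (x - u)‖ₑ := by
            refine lintegral_mono fun x => ?_
            have e : h x - h (x - t) = ∫ u in Ioc 0 t, h' (x - u) := by
              rw [← intervalIntegral.integral_of_le ht.le,
                intervalIntegral.integral_comp_sub_left, sub_zero,
                intervalIntegral.integral_eq_sub_of_hasDerivAt (fun y _ => hd y)
                  (hc.intervalIntegrable _ _)]
            rw [e]
            exact enorm_integral_le_lintegral_enorm _
        _ = ∫⁻ u in Ioc 0 t, ∫⁻ x, ‖h' (x - u)‖ₑ := by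
            apply lintegral_lintegral_swap
            apply Measurable.aemeasurable
            have : Continuous (Function.uncurry fun (x u : ℝ) => h' (x - u)) := by
              unfold Function.uncurry
              fun_prop
            exact this.measurable.enorm
        _ = ∫⁻ u in Ioc 0 t, ∫⁻ x, ‖h' x‖ₑ := by
            congr 1 with u
            exact lintegral_sub_right_eq_self (fun x => ‖h' x‖ₑ) u
        _ = _ := by
            rw [setLIntegral_const, Real.volume_Ioc, sub_zero, mul_comm]
    have h3 := ENNReal.toReal_mono (ENNReal.mul_ne_top ENNReal.ofReal_ne_top hi'.2.ne) this
    rwa [ENNReal.toReal_mul, ENNReal.toReal_ofReal ht.le] at h3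
  rcases le_total 1 t with h | h
  · rw [min_eq_left h]; linarith
  · rw [min_eq_right h]
    nlinarith

lemma frac_key {s : ℝ} (h0 : 0 < s) (h1 : s < 1) {h h' : ℝ → ℂ}
    (hd : ∀ x, HasDerivAt h (h' x) x) (hc : Continuous h')
    (hi : Integrable h) (hi' : Integrable h') {M M' : ℝ} (hM : ∀ x, ‖h x‖ ≤ M)
    (hM' : ∀ x, ‖h' x‖ ≤ M') :
    ∃ g : ℝ → ℂ, Continuous g ∧ Integrable g ∧ ∀ ω : ℝ,
      (∫ x : ℝ, g x * Complex.exp (-(Complex.I * ω * x))) =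
      (Complex.I * ω) ^ (s : ℂ) * ∫ x : ℝ, h x * Complex.exp (-(Complex.I * ω * x)) := by
  have hcont : Continuous h := continuous_iff_continuousAt.2 fun x => (hd x).continuousAt
  have hM0 : 0 ≤ M := (norm_nonneg _).trans (hM 0)
  have hM0' : 0 ≤ M' := (norm_nonneg _).trans (hM' 0)
  set Φ : ℝ → ℝ → ℂ := fun x t => (h x - h (x - t)) * ((t ^ (-1 - s) : ℝ) : ℂ) with hΦ
  have Φm : Measurable (Function.uncurry Φ) := by
    have m1 := hcont.measurable
    simp only [hΦ, Function.uncurry_def]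
    fun_prop
  have Φn : ∀ x, ∀ t ∈ Ioi (0:ℝ), ‖Φ x t‖ = ‖h x - h (x - t)‖ * t ^ (-1 - s) := by
    intro x t ht
    have ht : 0 < t := ht
    simp only [hΦ]
    rw [norm_mul, Complex.norm_real, Real.norm_of_nonneg (by positivity)]
  have Φi : Integrable (Function.uncurry Φ) (volume.prod (volume.restrict (Ioi 0))) := by
    rw [integrable_prod_iff' Φm.aestronglyMeasurable]
    constructor
    · exact ae_of_all _ fun t =>
        (frac_shift_int hi t).mul_const (((t ^ (-1 - s) : ℝ) : ℂ))
    · refine Integrable.mono'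
        ((frac_kern_int h0 h1).const_mul (2 * (∫ x, ‖h x‖) + ∫ x, ‖h' x‖)) ?_ ?_
      · have := (Φm.norm.stronglyMeasurable).integral_prod_left' (μ := (volume : Measure ℝ))
        exact this.aestronglyMeasurable
      · refine (ae_restrict_iff' measurableSet_Ioi).2 (ae_of_all _ fun t ht => ?_)
        rw [Real.norm_of_nonneg (integral_nonneg fun _ => norm_nonneg _)]
        simp only [Function.uncurry_apply_pair]
        simp_rw [fun x => Φn x t ht]
        have ht : 0 < t := ht
        rw [integral_mul_const, ← mul_assoc]
        exact mul_le_mul_of_nonneg_right (frac_shift_bd hd hc hi hi' ht) (by positivity)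
  refine ⟨fun x => (fracK s 1)⁻¹ * ∫ t in Ioi (0:ℝ), Φ x t, ?_, ?_, ?_⟩
  · refine continuous_const.mul ?_
    refine continuous_of_dominated
      (bound := fun t => (2 * M + M') * (min 1 t * t ^ (-1 - s)))
      (fun x => (Φm.of_uncurry_left (x := x)).aestronglyMeasurable) (fun x => ?_)
      ((frac_kern_int h0 h1).const_mul _) (ae_of_all _ fun t => ?_)
    · refine (ae_restrict_iff' measurableSet_Ioi).2 (ae_of_all _ fun t ht => ?_)
      rw [Φn x t ht, ← mul_assoc]
      have ht : 0 < t := ht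
      refine mul_le_mul_of_nonneg_right ?_ (by positivity)
      have b1 : ‖h x - h (x - t)‖ ≤ 2 * M := by
        have := norm_sub_le (h x) (h (x - t))
        linarith [hM x, hM (x - t)]
      have b2 : ‖h x - h (x - t)‖ ≤ M' * t := by
        have := convex_univ.norm_image_sub_le_of_norm_hasDerivWithin_le
          (fun y _ => (hd y).hasDerivWithinAt) (fun y _ => hM' y) (mem_univ (x - t)) (mem_univ x)
        simpa [abs_of_pos ht] using this
      rcases le_total 1 t with h | h
      · rw [min_eq_left h]; linarith
      · rw [min_eq_right h]
        nlinarith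
    · simp only [hΦ]
      fun_prop
  · exact Φi.integral_prod_left.const_mul _
  · intro ω
    have hex : ∀ x : ℝ, ‖Complex.exp (-(Complex.I * ω * x))‖ = 1 := by
      intro x
      rw [Complex.norm_exp]
      simp
    have hexm : Measurable fun x : ℝ => Complex.exp (-(Complex.I * ω * x)) := by fun_prop
    have Ψi : Integrable (Function.uncurry fun x t => Φ x t * Complex.exp (-(Complex.I * ω * x)))
        (volume.prod (volume.restrict (Ioi 0))) := by
      refine Φi.mono (Measurable.aestronglyMeasurable ?_) (ae_of_all _ ?_)
      · exact Φm.mul (hexm.comp measurable_fst)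
      · rintro ⟨x, t⟩
        simp only [Function.uncurry_apply_pair]
        rw [norm_mul, hex, mul_one]
    have hei : ∀ {k : ℝ → ℂ}, Integrable k →
        Integrable fun x : ℝ => k x * Complex.exp (-(Complex.I * ω * x)) := by
      intro k hk
      exact hk.mono (hk.1.mul hexm.aestronglyMeasurable) (ae_of_all _ fun x => by
        rw [norm_mul, hex, mul_one])
    have inner : ∀ t : ℝ, ∫ x, Φ x t * Complex.exp (-(Complex.I * ω * x)) =
        ((1 - Complex.exp (-((Complex.I * ω) * t))) * ((t ^ (-1 - s) : ℝ) : ℂ)) *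
          ∫ x : ℝ, h x * Complex.exp (-(Complex.I * ω * x)) := by
      intro t
      have e1 : ∀ x : ℝ, Φ x t * Complex.exp (-(Complex.I * ω * x)) =
          ((t ^ (-1 - s) : ℝ) : ℂ) * (h x * Complex.exp (-(Complex.I * ω * x)) -
            h (x - t) * Complex.exp (-(Complex.I * ω * x))) := by
        intro x; simp only [hΦ]; ring
      have e2 : ∫ x, h (x - t) * Complex.exp (-(Complex.I * ω * x)) =
          Complex.exp (-((Complex.I * ω) * t)) *
            ∫ x : ℝ, h x * Complex.exp (-(Complex.I * ω * x)) := by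
        rw [← integral_const_mul, ← integral_sub_right_eq_self (fun x : ℝ =>
          Complex.exp (-((Complex.I * ω) * t)) * (h x * Complex.exp (-(Complex.I * ω * x)))) t]
        congr 1 with x
        rw [mul_left_comm, ← Complex.exp_add]
        congr 2
        push_cast
        ring
      simp_rw [e1]
      rw [integral_const_mul, integral_sub (hei hi) (hei (hi.comp_sub_right t)), e2]
      ring
    calc _ = (fracK s 1)⁻¹ * ∫ x, ∫ t in Ioi (0:ℝ), Φ x t * Complex.exp (-(Complex.I * ω * x)) := by
          rw [← integral_const_mul]
          congr 1 with x
          rw [integral_mul_const, mul_assoc]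
      _ = (fracK s 1)⁻¹ * (fracK s (Complex.I * ω) *
            ∫ x : ℝ, h x * Complex.exp (-(Complex.I * ω * x))) := by
          rw [integral_integral_swap Ψi]
          simp_rw [inner]
          rw [integral_mul_const]
          rfl
      _ = _ := by
          rw [fracK_im h0 h1]
          field_simp [fracK_one_ne h0 h1]

lemma frac_exp_norm (ω x : ℝ) : ‖Complex.exp (-(Complex.I * ω * x))‖ = 1 := by
  rw [Complex.norm_exp]
  simp

lemma frac_ft_cont {k : ℝ → ℂ} (hk : Integrable k) :
    Continuous fun ω : ℝ => ∫ x : ℝ, k x * Complex.exp (-(Complex.I * ω * x)) := by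
  refine continuous_of_dominated (bound := fun x => ‖k x‖) (fun ω => ?_) (fun ω => ?_) hk.norm ?_
  · have : Measurable fun x : ℝ => Complex.exp (-(Complex.I * ω * x)) := by fun_prop
    exact hk.1.mul this.aestronglyMeasurable
  · exact ae_of_all _ fun x => by rw [norm_mul, frac_exp_norm, mul_one]
  · exact ae_of_all _ fun x => by fun_prop

lemma frac_ft_bd (k : ℝ → ℂ) (ω : ℝ) :
    ‖∫ x : ℝ, k x * Complex.exp (-(Complex.I * ω * x))‖ ≤ ∫ x, ‖k x‖ := by
  refine (norm_integral_le_integral_norm _).trans (le_of_eq ?_)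
  congr 1 with x
  rw [norm_mul, frac_exp_norm, mul_one]

open FourierTransform in
lemma frac_ft_eq (k : ℝ → ℂ) (ξ : ℝ) :
    𝓕 k ξ = ∫ x : ℝ, k x * Complex.exp (-(Complex.I * ((2 * π * ξ : ℝ) : ℂ) * x)) := by
  rw [Real.fourier_real_eq_integral_exp_smul]
  congr 1 with x
  rw [smul_eq_mul, mul_comm]
  congr 2
  push_cast
  ring

open FourierTransform in
lemma frac_inv {g G : ℝ → ℂ} (hc : Continuous g) (hi : Integrable g)
    (hG : ∀ ω : ℝ, (∫ x : ℝ, g x * Complex.exp (-(Complex.I * ω * x))) = G ω)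
    (hGi : Integrable G) (x : ℝ) :
    (1 / (2 * (π : ℂ))) * ∫ ω : ℝ, G ω * Complex.exp (Complex.I * ω * x) = g x := by
  have hpi : (0:ℝ) < 2 * π := by positivity
  have e : 𝓕 g = fun ξ => G (2 * π * ξ) := by
    ext ξ
    rw [frac_ft_eq, hG]
  have hi2 : Integrable (𝓕 g) := by
    rw [e]
    exact hGi.comp_mul_left' hpi.ne'
  have h := congrFun (hc.fourierInv_fourier_eq hi hi2) x
  rw [← h, Real.fourierInv_eq', e]
  have h3 := Measure.integral_comp_mul_left
    (fun ω : ℝ => G ω * Complex.exp (Complex.I * ω * x)) (2 * π)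
  rw [abs_of_pos (by positivity), Complex.real_smul] at h3
  have c : (((2 * π)⁻¹ : ℝ) : ℂ) = 1 / (2 * (π : ℂ)) := by push_cast; rw [one_div]
  rw [c] at h3
  rw [← h3]
  congr 1 with ξ
  rw [smul_eq_mul, mul_comm]
  congr 2
  simp
  ring

lemma frac_bdd {h h' : ℝ → ℂ} (hd : ∀ x, HasDerivAt h (h' x) x)
    (hi' : Integrable h') (x : ℝ) : ‖h x‖ ≤ ‖h 0‖ + ∫ y, ‖h' y‖ := by
  have e : h x = h 0 + ∫ y in (0:ℝ)..x, h' y := by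
    rw [intervalIntegral.integral_eq_sub_of_hasDerivAt (fun y _ => hd y)
      hi'.intervalIntegrable]
    ring
  rw [e]
  refine (norm_add_le _ _).trans (add_le_add_right ?_ _)
  refine intervalIntegral.norm_integral_le_integral_norm_uIoc.trans ?_
  exact setIntegral_le_integral hi'.norm (ae_of_all _ fun _ => norm_nonneg _)

lemma frac_deriv {m : ℕ} {f : ℝ → ℂ} (hf : ContDiff ℝ m f)  {n : ℕ} (hn : n < m) (x : ℝ) :
    HasDerivAt (iteratedDeriv n f) (iteratedDeriv (n + 1) f x) x := by
  rw [iteratedDeriv_succ]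
  exact ((hf.differentiable_iteratedDeriv n (by exact_mod_cast hn)) x).hasDerivAt

open FourierTransform in
lemma frac_ft_deriv {m : ℕ} {f : ℝ → ℂ} (hf : ContDiff ℝ m f)
    (hint : ∀ n ≤ m, Integrable (iteratedDeriv n f)) {n : ℕ} (hn : n ≤ m) (ω : ℝ) :
    (∫ x : ℝ, iteratedDeriv n f x * Complex.exp (-(Complex.I * ω * x))) =
      (Complex.I * ω) ^ n * ∫ x : ℝ, f x * Complex.exp (-(Complex.I * ω * x)) := by
  have h := congrFun (Real.fourier_iteratedDeriv (N := m) (n := n) hf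
    (fun k hk => hint k (by exact_mod_cast hk)) (by exact_mod_cast hn)) (ω / (2 * π))
  have e : 2 * π * (ω / (2 * π)) = ω := by field_simp
  simp only [frac_ft_eq, e, smul_eq_mul] at h
  rw [h]
  congr 2
  have : (π : ℂ) ≠ 0 := by exact_mod_cast pi_ne_zero
  push_cast
  field_simp

lemma frac_exists {p : ℝ} (hp : 0 < p) {m : ℕ} (hm : (m : ℝ) > p + 1)
    {f : ℝ → ℂ} (hf : ContDiff ℝ m f)
    (hint : ∀ n ≤ m, Integrable (iteratedDeriv n f)) :
    ∃ g : ℝ → ℂ, Continuous g ∧ Integrable g ∧ ∀ ω : ℝ,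
      (∫ x : ℝ, g x * Complex.exp (-(Complex.I * ω * x))) =
      (Complex.I * ω) ^ (p : ℂ) * ∫ x : ℝ, f x * Complex.exp (-(Complex.I * ω * x)) := by
  have hk1 := Nat.floor_le hp.le
  have hk2 := Nat.lt_floor_add_one p
  set k := ⌊p⌋₊ with hk
  have hkm : k + 1 < m := by
    have : (k : ℝ) + 1 < m := by linarith
    exact_mod_cast this
  rcases hk1.eq_or_lt with h | h
  · refine ⟨iteratedDeriv k f, hf.continuous_iteratedDeriv k (by exact_mod_cast (by omega)),
      hint k (by omega), fun ω => ?_⟩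
    rw [frac_ft_deriv hf hint (by omega), ← h]
    simp
  · obtain ⟨g, g1, g2, g3⟩ := frac_key (s := p - k) (by linarith) (by linarith)
      (fun x => frac_deriv hf (n := k) (by omega) x)
      (hf.continuous_iteratedDeriv (k + 1) (by exact_mod_cast (by omega)))
      (hint k (by omega)) (hint (k + 1) (by omega))
      (frac_bdd (fun x => frac_deriv hf (n := k) (by omega) x) (hint (k + 1) (by omega)))
      (frac_bdd (fun x => frac_deriv hf (n := k + 1) (by omega) x) (hint (k + 2) (by omega)))
    refine ⟨g, g1, g2, fun ω => ?_⟩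
    rw [g3, frac_ft_deriv hf hint (by omega), ← mul_assoc]
    congr 1
    by_cases hω : ω = 0
    · subst hω
      have h1 : ((p - k : ℝ) : ℂ) ≠ 0 := by
        have : p - k ≠ 0 := by linarith
        exact_mod_cast this
      have h2 : (p : ℂ) ≠ 0 := by exact_mod_cast hp.ne'
      rw [Complex.ofReal_zero, mul_zero, Complex.zero_cpow h1, Complex.zero_cpow h2, zero_mul]
    · have : Complex.I * (ω : ℂ) ≠ 0 :=
        mul_ne_zero Complex.I_ne_zero (by exact_mod_cast hω)
      rw [← Complex.cpow_natCast, ← Complex.cpow_add _ _ this]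
      congr 1
      push_cast
      ring

lemma frac_cpow_norm {p : ℝ} (hp : 0 < p) (ω : ℝ) : ‖(Complex.I * ω) ^ (p : ℂ)‖ = |ω| ^ p := by
  by_cases hω : ω = 0
  · subst hω
    have h2 : (p : ℂ) ≠ 0 := by exact_mod_cast hp.ne'
    simp [Complex.zero_cpow h2, Real.zero_rpow hp.ne']
  · rw [Complex.norm_cpow_real, norm_mul, Complex.norm_I, one_mul, Complex.norm_real,
      Real.norm_eq_abs]

lemma frac_G_int {p : ℝ} (hp : 0 < p) {m : ℕ} (hm : (m : ℝ) > p + 1)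
    {f : ℝ → ℂ} (hf : ContDiff ℝ m f)
    (hint : ∀ n ≤ m, Integrable (iteratedDeriv n f)) :
    Integrable fun ω : ℝ =>
      (Complex.I * ω) ^ (p : ℂ) * ∫ x : ℝ, f x * Complex.exp (-(Complex.I * ω * x)) := by
  have hfi : Integrable f := by simpa using hint 0 (Nat.zero_le _)
  set A := ∫ x, ‖f x‖ with hA
  set B := ∫ x, ‖iteratedDeriv m f x‖ with hB
  have hdom : Integrable fun ω : ℝ => 2 ^ m * (A + B) * (1 + ‖ω‖) ^ (-((m : ℝ) - p)) := by
    apply Integrable.const_mul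
    apply integrable_one_add_norm
    simp
    linarith
  refine hdom.mono' ?_ (ae_of_all _ fun ω => ?_)
  · have m1 : Measurable fun ω : ℝ => (Complex.I * ω) ^ (p : ℂ) := by fun_prop
    exact (m1.mul (frac_ft_cont hfi).measurable).aestronglyMeasurable
  · set T := ∫ x : ℝ, f x * Complex.exp (-(Complex.I * ω * x)) with hT
    have b1 : ‖T‖ ≤ A := frac_ft_bd f ω
    have b2 : |ω| ^ m * ‖T‖ ≤ B := by
      have := frac_ft_bd (iteratedDeriv m f) ω
      rw [frac_ft_deriv hf hint le_rfl, norm_mul, norm_pow, norm_mul, Complex.norm_I, one_mul,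
        Complex.norm_real, Real.norm_eq_abs] at this
      exact this
    rw [norm_mul, frac_cpow_norm hp, Real.norm_eq_abs]
    have w0 := abs_nonneg ω
    have hw : 0 < 1 + |ω| := by positivity
    have b3 : (1 + |ω|) ^ m * ‖T‖ ≤ 2 ^ m * (A + B) := by
      have : (1 + |ω|) ^ m ≤ 2 ^ m * (1 + |ω| ^ m) := by
        rcases le_total |ω| 1 with h | h
        · have h1 : (1 + |ω|) ^ m ≤ 2 ^ m := pow_le_pow_left₀ hw.le (by linarith) m
          have h2 : (0:ℝ) ≤ 2 ^ m * |ω| ^ m := by positivity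
          linarith
        · have h1 : (1 + |ω|) ^ m ≤ (2 * |ω|) ^ m := pow_le_pow_left₀ hw.le (by linarith) m
          rw [mul_pow] at h1
          have h2 : (0:ℝ) ≤ 2 ^ m := by positivity
          linarith
      calc _ ≤ 2 ^ m * (1 + |ω| ^ m) * ‖T‖ := by gcongr
        _ = 2 ^ m * (‖T‖ + |ω| ^ m * ‖T‖) := by ring
        _ ≤ _ := by gcongr
    have e : (1 + |ω|) ^ p = (1 + |ω|) ^ m * (1 + |ω|) ^ (-((m : ℝ) - p)) := by
      rw [← Real.rpow_natCast, ← Real.rpow_add hw]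
      congr 1; ring
    calc _ ≤ (1 + |ω|) ^ p * ‖T‖ := by
          gcongr
          linarith
      _ = (1 + |ω|) ^ m * ‖T‖ * (1 + |ω|) ^ (-((m : ℝ) - p)) := by rw [e]; ring
      _ ≤ _ := by gcongr

end FracAux

/-- For `p > 0` and `m > p + 1`, if `f` is `m` times continuously differentiable with all
derivatives up to order `m` integrable and `x·f(x)` integrable, then the fractional derivative
`f^{(p)}(x) = (1/2π) ∫ (iω)^p F(ω) e^{iωx} dω` (with `F = 𝓕f`) is given by an absolutely
convergent integral, is continuous and integrable, and `𝓕(f^{(p)})(ω) = (iω)^p F(ω)`. -/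
theorem stmt_13 (p : ℝ) (hp : 0 < p) (m : ℕ) (hm : (m : ℝ) > p + 1)
    (f : ℝ → ℂ) (hf : ContDiff ℝ m f)
    (hint : ∀ n ≤ m, Integrable (iteratedDeriv n f))
    (hxf : Integrable (fun x : ℝ => (x : ℂ) * f x))
    (F : ℝ → ℂ) (hF : ∀ ω : ℝ, F ω = ∫ x : ℝ, f x * Complex.exp (-(Complex.I * ω * x)))
    (fp : ℝ → ℂ)
    (hfp : ∀ x : ℝ, fp x = (1 / (2 * (Real.pi : ℂ))) *
      ∫ ω : ℝ, (Complex.I * ω) ^ (p : ℂ) * F ω * Complex.exp (Complex.I * ω * x)) :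
    (∀ x : ℝ, Integrable
      (fun ω : ℝ => (Complex.I * ω) ^ (p : ℂ) * F ω * Complex.exp (Complex.I * ω * x))) ∧
    Continuous fp ∧ Integrable fp ∧
    ∀ ω : ℝ, (∫ x : ℝ, fp x * Complex.exp (-(Complex.I * ω * x))) =
      (Complex.I * ω) ^ (p : ℂ) * F ω := by
  have hGi := frac_G_int hp hm hf hint
  obtain ⟨g, g1, g2, g3⟩ := frac_exists hp hm hf hint
  simp_rw [← hF] at hGi g3
  have hfg : fp = g := by
    ext x
    rw [hfp]
    exact frac_inv g1 g2 g3 hGi x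
  refine ⟨fun x => ?_, hfg ▸ g1, hfg ▸ g2, ?_⟩
  · have hm1 : Measurable fun ω : ℝ => Complex.exp (Complex.I * ω * x) := by fun_prop
    refine hGi.mono (hGi.1.mul hm1.aestronglyMeasurable) (ae_of_all _ fun ω => ?_)
    rw [norm_mul _ (Complex.exp _), Complex.norm_exp]
    simp
  · rw [hfg]
    exact g3
end

section
/- Let n be a nonnegative integer and let m be an integer with m > n + 1. Let f : ℝ → ℂ be m times continuously differentiable with f^{(k)} ∈ L¹(ℝ) for every 0 ≤ k ≤ m, and let F = 𝓕f. Then for every real x, (1/(2π)) ∫_ℝ (iω)^n F(ω) e^{iωx} dω = f^{(n)}(x), the classical n-th derivative of f at x; i.e., the fractional-derivative formula recovers the usual derivative when the order is an integer. -/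
open MeasureTheory Real

open FourierTransform in
lemma aux_int (n m : ℕ) (hm : m > n + 1) (f : ℝ → ℂ) (hf : ContDiff ℝ m f)
    (hint : ∀ k ≤ m, Integrable (iteratedDeriv k f)) :
    Integrable (𝓕 (iteratedDeriv n f)) := by
  have h1 := Real.fourier_iteratedDeriv (N := (m : ℕ∞)) (n := n) (by exact_mod_cast hf)
    (fun k hk => hint k (by exact_mod_cast hk)) (by exact_mod_cast (by omega : n ≤ m))
  have h2 := Real.fourier_iteratedDeriv (N := (m : ℕ∞)) (n := n + 2) (by exact_mod_cast hf)
    (fun k hk => hint k (by exact_mod_cast hk)) (by exact_mod_cast (by omega : n + 2 ≤ m))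
  have hb : ∀ k x, ‖𝓕 (iteratedDeriv k f) x‖ ≤ ∫ v, ‖iteratedDeriv k f v‖ := fun k x =>
    VectorFourier.norm_fourierIntegral_le_integral_norm _ _ _ _ _
  have hc : Continuous (𝓕 (iteratedDeriv n f)) :=
    VectorFourier.fourierIntegral_continuous Real.continuous_fourierChar
      (by exact continuous_inner) (hint n (by omega))
  refine (integrable_inv_one_add_sq.const_mul
    ((∫ v, ‖iteratedDeriv n f v‖) + ∫ v, ‖iteratedDeriv (n+2) f v‖)).mono'
    hc.aestronglyMeasurable (Filter.Eventually.of_forall fun x => ?_)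
  have e : ‖𝓕 (iteratedDeriv (n+2) f) x‖ = (2 * π * x) ^ 2 * ‖𝓕 (iteratedDeriv n f) x‖ := by
    rw [h1, h2]
    simp only [norm_smul, norm_pow, norm_mul, Complex.norm_I, Complex.norm_real, pow_add,
      Complex.norm_ofNat, mul_one, Real.norm_eq_abs, mul_pow, sq_abs]
    ring
  have b1 := hb n x
  have b2 := hb (n+2) x
  rw [e] at b2
  rw [← div_eq_mul_inv, le_div_iff₀ (by positivity)]
  have hx : x ^ 2 ≤ (2 * π * x) ^ 2 := by
    have : 1 ≤ (2 * π) ^ 2 := by nlinarith [Real.pi_gt_three]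
    rw [mul_pow]
    nlinarith [sq_nonneg x]
  nlinarith [norm_nonneg (𝓕 (iteratedDeriv n f) x),
    mul_le_mul_of_nonneg_right hx (norm_nonneg (𝓕 (iteratedDeriv n f) x))]

/-- For a nonnegative integer `n` and `m > n + 1`, if `f` is `m` times continuously
differentiable with all derivatives up to order `m` integrable and `F = 𝓕f`, then
`(1/2π) ∫ (iω)^n F(ω) e^{iωx} dω = f^{(n)}(x)`: the fractional-derivative formula recovers
the classical derivative at integer orders. -/
theorem stmt_14 (n m : ℕ) (hm : m > n + 1) (f : ℝ → ℂ) (hf : ContDiff ℝ m f)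
    (hint : ∀ k ≤ m, Integrable (iteratedDeriv k f))
    (F : ℝ → ℂ) (hF : ∀ ω : ℝ, F ω = ∫ x : ℝ, f x * Complex.exp (-(Complex.I * ω * x))) :
    ∀ x : ℝ, (1 / (2 * (Real.pi : ℂ))) *
        (∫ ω : ℝ, (Complex.I * ω) ^ n * F ω * Complex.exp (Complex.I * ω * x)) =
      iteratedDeriv n f x := by
  intro x
  have h1 := Real.fourier_iteratedDeriv (N := (m : ℕ∞)) (n := n) (by exact_mod_cast hf)
    (fun k hk => hint k (by exact_mod_cast hk)) (by exact_mod_cast (by omega : n ≤ m))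
  have hcont : Continuous (iteratedDeriv n f) :=
    hf.continuous_iteratedDeriv n (by exact_mod_cast (by omega : n ≤ m))
  have inv := congrFun (hcont.fourierInv_fourier_eq (hint n (by omega))
    (aux_int n m hm f hf hint)) x
  rw [← inv, h1, Real.fourierInv_eq']
  have cv := Measure.integral_comp_mul_left (fun ω : ℝ =>
    (Complex.I * ω) ^ n * F ω * Complex.exp (Complex.I * ω * x)) (2 * π)
  have hp : |(2 * π)⁻¹| = (2 * π)⁻¹ := abs_of_pos (by positivity)
  rw [hp, Complex.real_smul] at cv
  have hc : (1 / (2 * (Real.pi : ℂ))) = (((2 * π)⁻¹ : ℝ) : ℂ) := by push_cast; simp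
  rw [hc, ← cv]
  congr 1
  ext v
  rw [hF, Real.fourier_real_eq_integral_exp_smul]
  have : (∫ y : ℝ, f y * Complex.exp (-(Complex.I * ((2 * π * v : ℝ) : ℂ) * y)))
      = ∫ y : ℝ, Complex.exp (((-2 * π * y * v : ℝ) : ℂ) * Complex.I) • f y := by
    congr 1
    ext y
    rw [smul_eq_mul, mul_comm]
    congr 2
    push_cast
    ring
  rw [this, smul_eq_mul, smul_eq_mul]
  have e1 : Complex.I * ((2 * π * v : ℝ) : ℂ) = 2 * π * Complex.I * v := by push_cast; ring
  rw [e1, mul_comm]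
  congr 2
  simp
  ring
end

section
/- Let p > 0 and let m be an integer with m > p + 1. Let f : ℝ → ℂ be m times continuously differentiable with f^{(n)} ∈ L¹(ℝ) for every 0 ≤ n ≤ m, and write F = 𝓕f. Then for θ ∈ {e,o}: the integral defining f^θ_p(x) converges absolutely for every x, the function f^θ_p is continuous on ℝ, and φ^θ_p(·,ρ) converges to f^θ_p uniformly on ℝ as ρ → ∞, i.e. sup_{x∈ℝ} |φ^θ_p(x,ρ) − f^θ_p(x)| → 0 as ρ → ∞. Moreover f^θ_p is k times continuously differentiable for every integer k with 0 ≤ k < m − p − 1. -/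
open MeasureTheory Real

/-- The even frequency-domain multiplier `(iω)^p + (-iω)^p` (principal branch;
`0^p = 0` for `p > 0`). -/
noncomputable def kerE (p ω : ℝ) : ℂ :=
  (Complex.I * ω) ^ (p : ℂ) + (-(Complex.I * ω)) ^ (p : ℂ)

/-- The odd frequency-domain multiplier `(iω)^p - (-iω)^p`. -/
noncomputable def kerO (p ω : ℝ) : ℂ :=
  (Complex.I * ω) ^ (p : ℂ) - (-(Complex.I * ω)) ^ (p : ℂ)

/-- `φ^e_p(x,ρ) = (1/2π) ∫ F(ω)((iω)^p + (-iω)^p) e^{-ω²/(2ρ²)} e^{iωx} dω`. -/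
noncomputable def phiE (F : ℝ → ℂ) (p x ρ : ℝ) : ℂ :=
  (1 / (2 * (Real.pi : ℂ))) *
    ∫ ω : ℝ, F ω * kerE p ω * ((Real.exp (-ω ^ 2 / (2 * ρ ^ 2)) : ℝ) : ℂ) *
      Complex.exp (Complex.I * ω * x)

/-- `φ^o_p(x,ρ) = (1/2π) ∫ F(ω)((iω)^p - (-iω)^p) e^{-ω²/(2ρ²)} e^{iωx} dω`. -/
noncomputable def phiO (F : ℝ → ℂ) (p x ρ : ℝ) : ℂ :=
  (1 / (2 * (Real.pi : ℂ))) *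
    ∫ ω : ℝ, F ω * kerO p ω * ((Real.exp (-ω ^ 2 / (2 * ρ ^ 2)) : ℝ) : ℂ) *
      Complex.exp (Complex.I * ω * x)

/-- `f^e_p(x) = (1/2π) ∫ F(ω)((iω)^p + (-iω)^p) e^{iωx} dω`. -/
noncomputable def limE (F : ℝ → ℂ) (p x : ℝ) : ℂ :=
  (1 / (2 * (Real.pi : ℂ))) * ∫ ω : ℝ, F ω * kerE p ω * Complex.exp (Complex.I * ω * x)

/-- `f^o_p(x) = (1/2π) ∫ F(ω)((iω)^p - (-iω)^p) e^{iωx} dω`. -/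
noncomputable def limO (F : ℝ → ℂ) (p x : ℝ) : ℂ :=
  (1 / (2 * (Real.pi : ℂ))) * ∫ ω : ℝ, F ω * kerO p ω * Complex.exp (Complex.I * ω * x)


open scoped FourierTransform in
lemma aux_contDiff (H : ℝ → ℂ) (k : ℕ)
    (hH : ∀ n : ℕ, n ≤ k → Integrable (fun v ↦ ‖v‖ ^ n * ‖H v‖)) :
    ContDiff ℝ k (fun x : ℝ => (1 / (2 * (Real.pi : ℂ))) *
      ∫ ω : ℝ, H ω * Complex.exp (Complex.I * ω * x)) := by
  have h1 : ContDiff ℝ ((k : ℕ∞) : WithTop ℕ∞) (𝓕 H) := by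
    apply Real.contDiff_fourier
    intro n hn
    exact hH n (by exact_mod_cast hn)
  have h2 : (fun x : ℝ => (1 / (2 * (Real.pi : ℂ))) *
      ∫ ω : ℝ, H ω * Complex.exp (Complex.I * ω * x)) =
      fun x : ℝ => (1 / (2 * (Real.pi : ℂ))) * 𝓕 H (-x / (2 * π)) := by
    funext x
    rw [Real.fourier_real_eq_integral_exp_smul]
    congr 1
    apply integral_congr_ae
    filter_upwards with ω
    rw [smul_eq_mul, mul_comm]
    congr 2
    have : (π : ℂ) ≠ 0 := by exact_mod_cast Real.pi_ne_zero
    push_cast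
    field_simp
  rw [h2]
  apply ContDiff.mul contDiff_const
  exact h1.comp ((contDiff_id.neg).div_const _)

lemma aux_unif (H : ℝ → ℂ) (hH : Integrable H) :
    TendstoUniformly (fun (ρ x : ℝ) => (1 / (2 * (Real.pi : ℂ))) *
      ∫ ω : ℝ, H ω * ((Real.exp (-ω ^ 2 / (2 * ρ ^ 2)) : ℝ) : ℂ) * Complex.exp (Complex.I * ω * x))
      (fun x : ℝ => (1 / (2 * (Real.pi : ℂ))) *
      ∫ ω : ℝ, H ω * Complex.exp (Complex.I * ω * x)) Filter.atTop := by
  have hexp : ∀ ω x : ℝ, ‖Complex.exp (Complex.I * ω * x)‖ = 1 := by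
    intro ω x
    rw [Complex.norm_exp]; simp
  have hb : ∀ ρ ω : ℝ, |1 - Real.exp (-ω ^ 2 / (2 * ρ ^ 2))| ≤ 1 := by
    intro ρ ω
    have h1 : Real.exp (-ω ^ 2 / (2 * ρ ^ 2)) ≤ 1 := by
      rw [Real.exp_le_one_iff, neg_div]
      have : 0 ≤ ω ^ 2 / (2 * ρ ^ 2) := by positivity
      linarith
    have h2 := Real.exp_pos (-ω ^ 2 / (2 * ρ ^ 2))
    rw [abs_le]; constructor <;> linarith
  have hb' : ∀ ρ ω : ℝ, Real.exp (-ω ^ 2 / (2 * ρ ^ 2)) ≤ 1 := by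
    intro ρ ω
    rw [Real.exp_le_one_iff, neg_div]
    have : 0 ≤ ω ^ 2 / (2 * ρ ^ 2) := by positivity
    linarith
  have hmeas : ∀ ρ : ℝ, AEStronglyMeasurable
      (fun ω : ℝ => ‖H ω‖ * |1 - Real.exp (-ω ^ 2 / (2 * ρ ^ 2))|) volume := by
    intro ρ
    apply hH.1.norm.mul
    apply Continuous.aestronglyMeasurable
    fun_prop
  have key : Filter.Tendsto (fun ρ : ℝ => ∫ ω : ℝ, ‖H ω‖ * |1 - Real.exp (-ω ^ 2 / (2 * ρ ^ 2))|)
      Filter.atTop (nhds 0) := by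
    have := tendsto_integral_filter_of_dominated_convergence (μ := volume) (l := Filter.atTop)
      (F := fun (ρ : ℝ) (ω : ℝ) => ‖H ω‖ * |1 - Real.exp (-ω ^ 2 / (2 * ρ ^ 2))|)
      (f := fun _ => (0 : ℝ)) (fun ω => ‖H ω‖) (Filter.Eventually.of_forall hmeas) ?_ hH.norm ?_
    · simpa using this
    · filter_upwards with ρ
      filter_upwards with ω
      rw [Real.norm_eq_abs, abs_mul, abs_abs, abs_norm]
      exact mul_le_of_le_one_right (norm_nonneg _) (hb ρ ω)
    · filter_upwards with ω
      have h1 : Filter.Tendsto (fun ρ : ℝ => 2 * ρ ^ 2) Filter.atTop Filter.atTop :=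
        (Filter.tendsto_pow_atTop two_ne_zero).const_mul_atTop two_pos
      have h2 := (h1.const_div_atTop (-ω ^ 2)).rexp.const_sub 1 |>.abs.const_mul ‖H ω‖
      simpa using h2
  have hI1 : ∀ x : ℝ, Integrable (fun ω : ℝ => H ω * Complex.exp (Complex.I * ω * x)) := by
    intro x
    apply hH.mul_bdd (c := 1)
    · apply Continuous.aestronglyMeasurable; fun_prop
    · filter_upwards with ω
      exact (hexp ω x).le
  have hI2 : ∀ ρ x : ℝ, Integrable (fun ω : ℝ =>
      H ω * ((Real.exp (-ω ^ 2 / (2 * ρ ^ 2)) : ℝ) : ℂ) * Complex.exp (Complex.I * ω * x)) := by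
    intro ρ x
    apply Integrable.mul_bdd (c := 1)
    · apply hH.mul_bdd (c := 1)
      · apply Continuous.aestronglyMeasurable; fun_prop
      · filter_upwards with ω
        rw [Complex.norm_real, Real.norm_eq_abs, abs_of_pos (Real.exp_pos _)]
        exact hb' ρ ω
    · apply Continuous.aestronglyMeasurable; fun_prop
    · filter_upwards with ω
      exact (hexp ω x).le
  have key2 := key.const_mul ‖(1 / (2 * (Real.pi : ℂ)))‖
  rw [mul_zero] at key2
  rw [Metric.tendstoUniformly_iff]
  intro ε hε
  filter_upwards [key2.eventually (gt_mem_nhds hε)] with ρ hρ x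
  refine lt_of_le_of_lt ?_ hρ
  rw [dist_eq_norm, ← mul_sub, norm_mul, ← integral_sub (hI1 x) (hI2 ρ x)]
  gcongr
  refine (norm_integral_le_integral_norm _).trans (le_of_eq ?_)
  apply integral_congr_ae
  filter_upwards with ω
  have : H ω * Complex.exp (Complex.I * ω * x) -
      H ω * ((Real.exp (-ω ^ 2 / (2 * ρ ^ 2)) : ℝ) : ℂ) * Complex.exp (Complex.I * ω * x)
      = H ω * ((1 - Real.exp (-ω ^ 2 / (2 * ρ ^ 2)) : ℝ) : ℂ)
        * Complex.exp (Complex.I * ω * x) := by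
    push_cast; ring
  rw [this, norm_mul, norm_mul, hexp, mul_one, Complex.norm_real, Real.norm_eq_abs]

open scoped FourierTransform in
lemma aux_F (m : ℕ) (f : ℝ → ℂ) (hf : ContDiff ℝ m f)
    (hint : ∀ n ≤ m, Integrable (iteratedDeriv n f))
    (F : ℝ → ℂ) (hF : ∀ ω : ℝ, F ω = ∫ x : ℝ, f x * Complex.exp (-(Complex.I * ω * x))) :
    Continuous F ∧ ∃ C : ℝ, ∀ ω : ℝ, (1 + ‖ω‖) ^ m * ‖F ω‖ ≤ C := by
  have hfi : Integrable f := by simpa using hint 0 (Nat.zero_le _)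
  have hF2 : F = fun ω : ℝ => 𝓕 f (ω / (2 * π)) := by
    funext ω
    rw [hF, Real.fourier_real_eq_integral_exp_smul]
    apply integral_congr_ae
    filter_upwards with x
    rw [smul_eq_mul, mul_comm]
    congr 2
    have : (π : ℂ) ≠ 0 := by exact_mod_cast Real.pi_ne_zero
    push_cast
    field_simp
  have hc : Continuous (𝓕 f) := by
    have : ContDiff ℝ ((0 : ℕ∞) : WithTop ℕ∞) (𝓕 f) := by
      apply Real.contDiff_fourier
      intro n hn
      have : n = 0 := by simpa using hn
      subst this
      simpa using hfi.norm
    exact this.continuous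
  refine ⟨hF2 ▸ hc.comp (by fun_prop), ?_⟩
  have hle : ∀ g : ℝ → ℂ, ∀ ω : ℝ, ‖𝓕 g ω‖ ≤ ∫ x, ‖g x‖ := fun g ω =>
    VectorFourier.norm_fourierIntegral_le_integral_norm 𝐞 _ (innerₗ ℝ) g ω
  have hd := Real.fourier_iteratedDeriv (N := (m : ℕ∞)) (n := m) hf
    (fun n hn => hint n (by exact_mod_cast hn)) le_rfl
  have hm : ∀ ω : ℝ, ‖ω‖ ^ m * ‖F ω‖ ≤ ∫ x, ‖iteratedDeriv m f x‖ := by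
    intro ω
    have h1 := hle (iteratedDeriv m f) (ω / (2 * π))
    rw [hd] at h1
    simp only [norm_smul, norm_pow] at h1
    have h2 : (2 * (π : ℂ) * Complex.I * ((ω / (2 * π) : ℝ) : ℂ)) = Complex.I * ω := by
      have : (π : ℂ) ≠ 0 := by exact_mod_cast Real.pi_ne_zero
      push_cast
      field_simp
    rw [h2] at h1
    simpa [hF2] using h1
  have h0 : ∀ ω : ℝ, ‖F ω‖ ≤ ∫ x, ‖f x‖ := by
    intro ω
    rw [hF2]; exact hle f _
  refine ⟨2 ^ (m - 1) * ((∫ x, ‖f x‖) + ∫ x, ‖iteratedDeriv m f x‖), fun ω => ?_⟩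
  calc (1 + ‖ω‖) ^ m * ‖F ω‖ ≤ (2 ^ (m - 1) * (1 ^ m + ‖ω‖ ^ m)) * ‖F ω‖ := by
        gcongr
        exact add_pow_le zero_le_one (norm_nonneg _) m
    _ = 2 ^ (m - 1) * (‖F ω‖ + ‖ω‖ ^ m * ‖F ω‖) := by rw [one_pow]; ring
    _ ≤ _ := by
        gcongr
        · exact h0 ω
        · exact hm ω

lemma aux_int_s16 (p : ℝ) (hp : 0 < p) (m k : ℕ) (hk : (k : ℝ) < (m : ℝ) - p - 1)
    (F K : ℝ → ℂ) (hF : Continuous F) (C : ℝ) (hC : ∀ ω : ℝ, (1 + ‖ω‖) ^ m * ‖F ω‖ ≤ C)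
    (hK : Measurable K) (hKb : ∀ ω : ℝ, ‖K ω‖ ≤ 2 * ‖ω‖ ^ p) :
    Integrable (fun ω => ‖ω‖ ^ k * ‖F ω * K ω‖) := by
  have hI : Integrable (fun ω : ℝ => (1 + ‖ω‖) ^ (-((m : ℝ) - p - k))) := by
    apply integrable_one_add_norm
    simp; linarith
  refine (hI.const_mul (2 * C)).mono' ?_ ?_
  · apply Measurable.aestronglyMeasurable
    have := hF.measurable
    fun_prop
  · filter_upwards with ω
    have hpos : 0 < 1 + ‖ω‖ := by positivity
    have h1 : ‖ω‖ ^ k ≤ (1 + ‖ω‖) ^ k := by gcongr; linarith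
    have h2 : ‖ω‖ ^ p ≤ (1 + ‖ω‖) ^ p := by gcongr; linarith
    have h3 : (1 + ‖ω‖) ^ (-((m : ℝ) - p - k)) =
        (1 + ‖ω‖) ^ k * (1 + ‖ω‖) ^ p / (1 + ‖ω‖) ^ m := by
      rw [← Real.rpow_natCast, ← Real.rpow_natCast, ← Real.rpow_add hpos, ← Real.rpow_sub hpos]
      congr 1; ring
    have h4 : ‖F ω‖ ≤ C / (1 + ‖ω‖) ^ m := by
      rw [le_div_iff₀ (by positivity), mul_comm]; exact hC ω
    rw [h3, Real.norm_of_nonneg (by positivity), norm_mul]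
    calc ‖ω‖ ^ k * (‖F ω‖ * ‖K ω‖)
        ≤ (1 + ‖ω‖) ^ k * (C / (1 + ‖ω‖) ^ m * (2 * (1 + ‖ω‖) ^ p)) := by
          have := (hKb ω).trans (mul_le_mul_of_nonneg_left h2 zero_le_two)
          have h5 : 0 ≤ C / (1 + ‖ω‖) ^ m := (norm_nonneg _).trans h4
          gcongr
      _ = _ := by ring

lemma aux_all (p : ℝ) (hp : 0 < p) (m : ℕ) (hm : (m : ℝ) > p + 1)
    (F K : ℝ → ℂ) (hF : Continuous F) (C : ℝ) (hC : ∀ ω : ℝ, (1 + ‖ω‖) ^ m * ‖F ω‖ ≤ C)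
    (hK : Measurable K) (hKb : ∀ ω : ℝ, ‖K ω‖ ≤ 2 * ‖ω‖ ^ p) :
    Integrable (fun ω => F ω * K ω) ∧
    (∀ x : ℝ, Integrable (fun ω : ℝ => F ω * K ω * Complex.exp (Complex.I * ω * x))) ∧
    (∀ k : ℕ, (k : ℝ) < (m : ℝ) - p - 1 → 
      ContDiff ℝ k (fun x : ℝ => (1 / (2 * (Real.pi : ℂ))) *
      ∫ ω : ℝ, F ω * K ω * Complex.exp (Complex.I * ω * x))) := by
  have hI : Integrable (fun ω => F ω * K ω) := by
    have := aux_int_s16 p hp m 0 (by push_cast; linarith) F K hF C hC hK hKb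
    simp only [pow_zero, one_mul] at this
    refine (integrable_norm_iff ?_).1 this
    exact (hF.measurable.mul hK).aestronglyMeasurable
  refine ⟨hI, ?_, ?_⟩
  · intro x
    apply hI.mul_bdd (c := 1)
    · apply Continuous.aestronglyMeasurable; fun_prop
    · filter_upwards with ω
      rw [Complex.norm_exp]; simp
  · intro k hk
    apply aux_contDiff
    intro n hn
    refine aux_int_s16 p hp m n (lt_of_le_of_lt ?_ hk) F K hF C hC hK hKb
    exact_mod_cast hn

lemma kerE_meas (p : ℝ) : Measurable (kerE p) := by
  unfold kerE; fun_prop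

lemma kerO_meas (p : ℝ) : Measurable (kerO p) := by
  unfold kerO; fun_prop

lemma kerE_bd (p ω : ℝ) : ‖kerE p ω‖ ≤ 2 * ‖ω‖ ^ p := by
  unfold kerE
  refine (norm_add_le _ _).trans (le_of_eq ?_)
  simp only [Complex.norm_cpow_real, norm_neg, norm_mul, Complex.norm_I, Complex.norm_real]
  ring

lemma kerO_bd (p ω : ℝ) : ‖kerO p ω‖ ≤ 2 * ‖ω‖ ^ p := by
  unfold kerO
  refine (norm_sub_le _ _).trans (le_of_eq ?_)
  simp only [Complex.norm_cpow_real, norm_neg, norm_mul, Complex.norm_I, Complex.norm_real]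
  ring

/-- For `p > 0` and `m > p + 1`, the integrals defining `f^θ_p` converge absolutely, `f^θ_p` is
continuous, `φ^θ_p(·,ρ)` converges uniformly on `ℝ` to `f^θ_p` as `ρ → ∞`, and `f^θ_p` is `k`
times continuously differentiable for `0 ≤ k < m - p - 1` (θ = e, o). -/
theorem stmt_16 (p : ℝ) (hp : 0 < p) (m : ℕ) (hm : (m : ℝ) > p + 1)
    (f : ℝ → ℂ) (hf : ContDiff ℝ m f)
    (hint : ∀ n ≤ m, Integrable (iteratedDeriv n f))
    (F : ℝ → ℂ) (hF : ∀ ω : ℝ, F ω = ∫ x : ℝ, f x * Complex.exp (-(Complex.I * ω * x))) :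
    (∀ x : ℝ, Integrable (fun ω : ℝ => F ω * kerE p ω * Complex.exp (Complex.I * ω * x))) ∧
    (∀ x : ℝ, Integrable (fun ω : ℝ => F ω * kerO p ω * Complex.exp (Complex.I * ω * x))) ∧
    Continuous (fun x => limE F p x) ∧ Continuous (fun x => limO F p x) ∧
    TendstoUniformly (fun ρ x => phiE F p x ρ) (fun x => limE F p x) Filter.atTop ∧
    TendstoUniformly (fun ρ x => phiO F p x ρ) (fun x => limO F p x) Filter.atTop ∧
    (∀ k : ℕ, (k : ℝ) < (m : ℝ) - p - 1 →
      ContDiff ℝ k (fun x => limE F p x) ∧ ContDiff ℝ k (fun x => limO F p x)) := by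
  obtain ⟨hFc, C, hC⟩ := aux_F m f hf hint F hF
  obtain ⟨e1, e2, e3⟩ := aux_all p hp m hm F (kerE p) hFc C hC (kerE_meas p) (kerE_bd p)
  obtain ⟨o1, o2, o3⟩ := aux_all p hp m hm F (kerO p) hFc C hC (kerO_meas p) (kerO_bd p)
  have h0 : ((0 : ℕ) : ℝ) < (m : ℝ) - p - 1 := by push_cast; linarith
  exact ⟨e2, o2, (e3 0 h0).continuous, (o3 0 h0).continuous, aux_unif _ e1, aux_unif _ o1,
    fun k hk => ⟨e3 k hk, o3 k hk⟩⟩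
end

section
/- Let p > 0 and let m be an integer with m > p + 1. Let f : ℝ → ℂ be m times continuously differentiable with f^{(n)} ∈ L¹(ℝ) for every 0 ≤ n ≤ m. Then for θ ∈ {e,o}, the functions φ^θ_p(·,ρ) converge uniformly on ℝ to the identically zero function as ρ → 0⁺, i.e. sup_{x∈ℝ} |φ^θ_p(x,ρ)| → 0 as ρ → 0⁺. -/
open MeasureTheory Real

/-- Uniform bound lemma. -/
lemma ker_aux (p : ℝ) (hp : 0 < p) (F K : ℝ → ℂ) (C : ℝ) (hF : ∀ ω, ‖F ω‖ ≤ C)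
    (hK : ∀ ω : ℝ, ‖K ω‖ ≤ 2 * |ω| ^ p) :
    TendstoUniformly (fun (ρ x : ℝ) => (1 / (2 * (Real.pi : ℂ))) *
    ∫ ω : ℝ, F ω * K ω * ((Real.exp (-ω ^ 2 / (2 * ρ ^ 2)) : ℝ) : ℂ) *
      Complex.exp (Complex.I * ω * x)) (fun _ => 0) (nhdsWithin 0 (Set.Ioi 0)) := by
  have hC : 0 ≤ C := (norm_nonneg _).trans (hF 0)
  have hcont : Continuous (fun ω : ℝ => |ω| ^ p) :=
    continuous_abs.rpow_const (fun _ => Or.inr hp.le)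
  have hI1 : Integrable (fun ω : ℝ => |ω| ^ p * Real.exp (-(1/2) * ω ^ 2)) := by
    obtain ⟨n, hn⟩ := exists_nat_ge p
    have h := (integrable_rpow_mul_exp_neg_mul_sq (b := 1/2) (by norm_num) (s := n)
      (by linarith)).norm
    have h0 := integrable_exp_neg_mul_sq (b := 1/2) (by norm_num)
    refine (h0.add h).mono' (hcont.mul (by fun_prop)).aestronglyMeasurable
      (.of_forall fun ω => ?_)
    rw [Real.norm_of_nonneg (by positivity)]
    simp only [Pi.add_apply, norm_mul, Real.rpow_natCast, norm_pow,
      Real.norm_of_nonneg (Real.exp_pos _).le, Real.norm_eq_abs, Real.abs_exp]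
    have hle : |ω| ^ p ≤ 1 + |ω| ^ n := by
      rcases le_total |ω| 1 with h | h
      · have := Real.rpow_le_one (abs_nonneg ω) h hp.le
        have : 0 ≤ |ω| ^ n := by positivity
        linarith
      · have := Real.rpow_le_rpow_of_exponent_le h hn
        rw [Real.rpow_natCast] at this
        linarith
    have := mul_le_mul_of_nonneg_right hle (Real.exp_pos (-(1/2) * ω ^ 2)).le
    linarith
  have hdom : ∀ ρ : ℝ, 0 < ρ → ρ ≤ 1 → ∀ ω : ℝ,
      |ω| ^ p * Real.exp (-ω ^ 2 / (2 * ρ ^ 2)) ≤ |ω| ^ p * Real.exp (-(1/2) * ω ^ 2) := by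
    intro ρ h0 h1 ω
    gcongr
    rw [div_le_iff₀ (by positivity)]
    have : ρ ^ 2 ≤ 1 := by nlinarith
    nlinarith [sq_nonneg ω]
  have hev : ∀ᶠ ρ : ℝ in nhdsWithin 0 (Set.Ioi 0), 0 < ρ ∧ ρ ≤ 1 := by
    filter_upwards [Ioc_mem_nhdsGT (zero_lt_one' ℝ)] with ρ h using h
  have hmeas : ∀ ρ : ℝ, AEStronglyMeasurable
      (fun ω : ℝ => |ω| ^ p * Real.exp (-ω ^ 2 / (2 * ρ ^ 2))) volume := fun ρ =>
    (hcont.mul (by fun_prop)).aestronglyMeasurable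
  have hlim : Filter.Tendsto (fun ρ : ℝ => ∫ ω : ℝ, |ω| ^ p * Real.exp (-ω ^ 2 / (2 * ρ ^ 2)))
      (nhdsWithin 0 (Set.Ioi 0)) (nhds (∫ _ : ℝ, (0 : ℝ))) := by
    refine tendsto_integral_filter_of_dominated_convergence _ (.of_forall hmeas) ?_ hI1 ?_
    · filter_upwards [hev] with ρ h
      refine .of_forall fun ω => ?_
      rw [Real.norm_of_nonneg (by positivity)]
      exact hdom ρ h.1 h.2 ω
    · refine .of_forall fun ω => ?_
      by_cases hω : ω = 0
      · simp [hω, Real.zero_rpow hp.ne']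
      · suffices hs : Filter.Tendsto (fun ρ : ℝ => -ω ^ 2 / (2 * ρ ^ 2))
            (nhdsWithin 0 (Set.Ioi 0)) Filter.atBot by
          simpa using (Real.tendsto_exp_atBot.comp hs).const_mul (|ω| ^ p)
        have h1 : Filter.Tendsto (fun ρ : ℝ => (ρ⁻¹) ^ 2) (nhdsWithin 0 (Set.Ioi 0)) Filter.atTop :=
          (Filter.tendsto_pow_atTop two_ne_zero).comp tendsto_inv_nhdsGT_zero
        have h2 := h1.const_mul_atTop_of_neg (r := -ω ^ 2 / 2)
          (by have : 0 < ω ^ 2 := by positivity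
              linarith)
        refine h2.congr fun ρ => ?_
        rw [inv_pow, div_mul_eq_div_div]; rfl
  rw [integral_zero] at hlim
  rw [Metric.tendstoUniformly_iff]
  intro ε hε
  have hlim2 := hlim.const_mul (‖(1 / (2 * (Real.pi : ℂ)))‖ * (2 * C))
  rw [mul_zero] at hlim2
  filter_upwards [hev, hlim2.eventually_lt_const hε] with ρ hρ hlt x
  rw [dist_zero_left, norm_mul]
  refine lt_of_le_of_lt ?_ hlt
  rw [mul_assoc]
  gcongr
  rw [← integral_const_mul]
  refine norm_integral_le_of_norm_le (((hI1.mono' (hmeas ρ) ?_)).const_mul _) ?_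
  · refine .of_forall fun ω => ?_
    rw [Real.norm_of_nonneg (by positivity)]
    exact hdom ρ hρ.1 hρ.2 ω
  · refine .of_forall fun ω => ?_
    have he : ‖Complex.exp (Complex.I * ω * x)‖ = 1 := by
      rw [Complex.norm_exp]; simp
    rw [norm_mul, norm_mul, norm_mul, he, mul_one, Complex.norm_real,
      Real.norm_of_nonneg (Real.exp_pos _).le]
    calc _ ≤ C * (2 * |ω| ^ p) * Real.exp (-ω ^ 2 / (2 * ρ ^ 2)) := by
          gcongr
          exacts [hF ω, hK ω]
      _ = _ := by ring

/-- For `p > 0` and `m > p + 1`, the functions `φ^θ_p(·,ρ)` (θ = e, o) converge uniformly on `ℝ`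
to the identically zero function as `ρ → 0⁺`. -/
theorem stmt_17 (p : ℝ) (hp : 0 < p) (m : ℕ) (hm : (m : ℝ) > p + 1)
    (f : ℝ → ℂ) (hf : ContDiff ℝ m f)
    (hint : ∀ n ≤ m, Integrable (iteratedDeriv n f))
    (F : ℝ → ℂ) (hF : ∀ ω : ℝ, F ω = ∫ x : ℝ, f x * Complex.exp (-(Complex.I * ω * x))) :
    TendstoUniformly (fun ρ x => phiE F p x ρ) (fun _ => 0) (nhdsWithin 0 (Set.Ioi 0)) ∧
    TendstoUniformly (fun ρ x => phiO F p x ρ) (fun _ => 0) (nhdsWithin 0 (Set.Ioi 0)) := by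
  have hb : ∀ ω, ‖F ω‖ ≤ ∫ x, ‖f x‖ := by
    intro ω
    rw [hF]
    refine (norm_integral_le_integral_norm _).trans (le_of_eq ?_)
    congr 1
    ext x
    rw [norm_mul, Complex.norm_exp]
    simp
  have h1 : ∀ ω : ℝ, ‖(Complex.I * ω) ^ (p : ℂ)‖ = |ω| ^ p := by
    intro ω
    rw [Complex.norm_cpow_real]; simp
  have h2 : ∀ ω : ℝ, ‖(-(Complex.I * ω)) ^ (p : ℂ)‖ = |ω| ^ p := by
    intro ω
    rw [Complex.norm_cpow_real]; simp
  constructor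
  · refine ker_aux p hp F (kerE p) _ hb fun ω => ?_
    refine (norm_add_le _ _).trans (le_of_eq ?_)
    rw [h1, h2]; ring
  · refine ker_aux p hp F (kerO p) _ hb fun ω => ?_
    refine (norm_sub_le _ _).trans (le_of_eq ?_)
    rw [h1, h2]; ring
end

section
/- Let p > 0 and let m be an integer with m > p + 2. Let f : ℝ → ℂ be m times continuously differentiable with f^{(n)} ∈ L¹(ℝ) for every 0 ≤ n ≤ m. Then for θ ∈ {e,o} and for every ε > 0 there exist T > 0 and Q > 0 such that |φ^θ_p(x,ρ)| < ε for all x ∈ ℝ and ρ > 0 satisfying |x| > T or ρ < Q. -/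
open MeasureTheory Real

open Filter Topology FourierTransform

lemma rl_aux (H : ℝ → ℂ) (ε : ℝ) (hε : 0 < ε) :
    ∃ T : ℝ, 0 < T ∧ ∀ x : ℝ, T < |x| →
      ‖∫ ω : ℝ, H ω * Complex.exp (Complex.I * ω * x)‖ < ε := by
  have h := Real.tendsto_integral_exp_smul_cocompact H
  have h2 := (h.norm.eventually (gt_mem_nhds (by simpa using hε)))
  rw [Metric.cobounded_eq_cocompact.symm, ← comap_norm_atTop, eventually_comap] at h2
  obtain ⟨R, hR⟩ := eventually_atTop.1 h2
  refine ⟨2 * π * (|R| + 1), by positivity, fun x hx => ?_⟩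
  have := hR (|x| / (2 * π)) (by
    rw [le_div_iff₀ (by positivity)]
    nlinarith [le_abs_self R, Real.pi_pos]) (-x / (2 * π)) (by
      rw [norm_div, norm_neg, Real.norm_eq_abs, Real.norm_eq_abs,
        abs_of_pos (by positivity : 0 < 2 * π)])
  refine lt_of_eq_of_lt (congrArg norm (integral_congr_ae (Eventually.of_forall fun ω => ?_))) this
  beta_reduce
  rw [Circle.smul_def, Real.fourierChar_apply, smul_eq_mul, mul_comm]
  congr 2
  have : (π : ℂ) ≠ 0 := by exact_mod_cast Real.pi_ne_zero
  push_cast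
  field_simp

lemma norm_cexp_aux (ω x : ℝ) : ‖Complex.exp (Complex.I * ω * x)‖ = 1 := by
  rw [Complex.norm_exp]; simp

lemma w_le (t : ℝ) (ht : 0 ≤ t) (ω : ℝ) : Real.exp (-t * ω ^ 2) ≤ 1 := by
  rw [Real.exp_le_one_iff]; nlinarith [mul_nonneg ht (sq_nonneg ω)]

lemma intW (G : ℝ → ℂ) (hG : Integrable G) (t x : ℝ) (ht : 0 ≤ t) :
    Integrable (fun ω : ℝ => G ω * ((Real.exp (-t * ω ^ 2) : ℝ) : ℂ) *
      Complex.exp (Complex.I * ω * x)) := by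
  refine hG.mono (AEStronglyMeasurable.mul (hG.1.mul ?_) ?_) (Eventually.of_forall fun ω => ?_)
  · exact Continuous.aestronglyMeasurable (by fun_prop)
  · exact Continuous.aestronglyMeasurable (by fun_prop)
  · rw [norm_mul, norm_mul, norm_cexp_aux, mul_one, Complex.norm_real, Real.norm_eq_abs,
      abs_of_pos (Real.exp_pos _)]
    exact mul_le_of_le_one_right (norm_nonneg _) (w_le t ht ω)

lemma key (G : ℝ → ℂ) (hG : Integrable G) (ε : ℝ) (hε : 0 < ε) :
    ∃ T : ℝ, 0 < T ∧ ∃ Q : ℝ, 0 < Q ∧ ∀ x ρ : ℝ, 0 < ρ → (T < |x| ∨ ρ < Q) →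
      ‖∫ ω : ℝ, G ω * ((Real.exp (-ω ^ 2 / (2 * ρ ^ 2)) : ℝ) : ℂ) *
        Complex.exp (Complex.I * ω * x)‖ < ε := by
  -- large t
  have h1 : Tendsto (fun t : ℝ => ∫ ω, ‖G ω‖ * Real.exp (-t * ω ^ 2)) atTop
      (𝓝 (∫ _ : ℝ, (0 : ℝ))) := by
    refine tendsto_integral_filter_of_dominated_convergence (fun ω => ‖G ω‖) ?_ ?_ hG.norm ?_
    · exact Eventually.of_forall fun t => hG.1.norm.mul
        (Continuous.aestronglyMeasurable (by fun_prop))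
    · filter_upwards [eventually_ge_atTop 0] with t ht
      refine Eventually.of_forall fun ω => ?_
      rw [norm_mul, norm_norm, Real.norm_eq_abs, abs_of_pos (Real.exp_pos _)]
      exact mul_le_of_le_one_right (norm_nonneg _) (w_le t ht ω)
    · have : ∀ᵐ ω : ℝ, ω ≠ 0 := by simp [ae_iff]
      filter_upwards [this] with ω hω
      rw [← mul_zero ‖G ω‖]
      refine Tendsto.const_mul _ (Real.tendsto_exp_atBot.comp ?_)
      have hp : 0 < ω ^ 2 := by positivity
      exact (tendsto_neg_atTop_atBot).atBot_mul_const hp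
  rw [integral_zero] at h1
  obtain ⟨t0, ht0⟩ := eventually_atTop.1 (h1.eventually (gt_mem_nhds hε))
  set t1 := max t0 1
  have ht1 : 0 < t1 := lt_of_lt_of_le one_pos (le_max_right _ _)
  have hlarge : ∀ t ≥ t1, ∀ x : ℝ, ‖∫ ω : ℝ, G ω * ((Real.exp (-t * ω ^ 2) : ℝ) : ℂ) *
        Complex.exp (Complex.I * ω * x)‖ < ε := by
    intro t ht x
    refine lt_of_le_of_lt ?_ (ht0 t (le_trans (le_max_left _ _) ht))
    refine (norm_integral_le_integral_norm _).trans (le_of_eq ?_)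
    congr 1; ext ω
    rw [norm_mul, norm_mul, norm_cexp_aux, mul_one, Complex.norm_real, Real.norm_eq_abs,
      abs_of_pos (Real.exp_pos _)]
  -- compact range
  have hcomp : ∃ T : ℝ, 0 < T ∧ ∀ t ∈ Set.Icc 0 t1, 0 ≤ t → ∀ x : ℝ, T < |x| →
      ‖∫ ω : ℝ, G ω * ((Real.exp (-t * ω ^ 2) : ℝ) : ℂ) *
        Complex.exp (Complex.I * ω * x)‖ < ε := by
    refine (isCompact_Icc (a := (0:ℝ)) (b := t1)).induction_on
      (p := fun S => ∃ T : ℝ, 0 < T ∧ ∀ t ∈ S, 0 ≤ t → ∀ x : ℝ, T < |x| →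
      ‖∫ ω : ℝ, G ω * ((Real.exp (-t * ω ^ 2) : ℝ) : ℂ) *
        Complex.exp (Complex.I * ω * x)‖ < ε) ⟨1, one_pos, by simp⟩ ?_ ?_ ?_
    · rintro s s' hs ⟨T, hT, h⟩
      exact ⟨T, hT, fun t ht => h t (hs ht)⟩
    · rintro s s' ⟨T, hT, h⟩ ⟨T', hT', h'⟩
      refine ⟨max T T', lt_max_of_lt_left hT, fun t ht h0 x hx => ?_⟩
      rcases ht with ht | ht
      · exact h t ht h0 x (lt_of_le_of_lt (le_max_left _ _) hx)
      · exact h' t ht h0 x (lt_of_le_of_lt (le_max_right _ _) hx)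
    · intro s hs
      have h2 : Tendsto (fun t : ℝ => ∫ ω, ‖G ω‖ * |Real.exp (-t * ω ^ 2) - Real.exp (-s * ω ^ 2)|)
          (𝓝[Set.Icc 0 t1] s) (𝓝 (∫ _ : ℝ, (0 : ℝ))) := by
        refine tendsto_integral_filter_of_dominated_convergence (fun ω => ‖G ω‖) ?_ ?_ hG.norm ?_
        · exact Eventually.of_forall fun t => hG.1.norm.mul
            (Continuous.aestronglyMeasurable (by fun_prop))
        · filter_upwards [self_mem_nhdsWithin] with t ht
          refine Eventually.of_forall fun ω => ?_
          rw [norm_mul, norm_norm, Real.norm_eq_abs, abs_abs]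
          refine mul_le_of_le_one_right (norm_nonneg _) ?_
          rw [abs_le]
          have := w_le t ht.1 ω
          have := w_le s hs.1 ω
          constructor <;> linarith [Real.exp_pos (-t * ω ^ 2), Real.exp_pos (-s * ω ^ 2)]
        · refine Eventually.of_forall fun ω => ?_
          have hc : Continuous (fun t : ℝ =>
              ‖G ω‖ * |Real.exp (-t * ω ^ 2) - Real.exp (-s * ω ^ 2)|) := by fun_prop
          have := (hc.tendsto s).mono_left (nhdsWithin_le_nhds (s := Set.Icc 0 t1))
          simpa using this
      rw [integral_zero] at h2
      obtain ⟨T, hT, hTx⟩ := rl_aux (fun ω => G ω * ((Real.exp (-s * ω ^ 2) : ℝ) : ℂ)) (ε / 2)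
        (by positivity)
      refine ⟨_, h2.eventually (gt_mem_nhds (half_pos hε)), T, hT, fun t ht h0 x hx => ?_⟩
      have ht' : ∫ ω, ‖G ω‖ * |Real.exp (-t * ω ^ 2) - Real.exp (-s * ω ^ 2)| < ε / 2 := ht
      have e := integral_sub (intW G hG t x h0) (intW G hG s x hs.1)
      have e2 : ‖∫ ω : ℝ, (G ω * ((Real.exp (-t * ω ^ 2) : ℝ) : ℂ) *
          Complex.exp (Complex.I * ω * x) - G ω * ((Real.exp (-s * ω ^ 2) : ℝ) : ℂ) *
          Complex.exp (Complex.I * ω * x))‖ < ε / 2 := by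
        refine lt_of_le_of_lt ((norm_integral_le_integral_norm _).trans (le_of_eq ?_)) ht'
        congr 1; ext ω
        rw [← sub_mul, ← mul_sub, norm_mul, norm_mul, norm_cexp_aux, mul_one, ← Complex.ofReal_sub,
          Complex.norm_real, Real.norm_eq_abs]
      rw [e] at e2
      have e3 := hTx x hx
      have := norm_sub_norm_le (∫ ω : ℝ, G ω * ((Real.exp (-t * ω ^ 2) : ℝ) : ℂ) *
          Complex.exp (Complex.I * ω * x)) (∫ ω : ℝ, G ω * ((Real.exp (-s * ω ^ 2) : ℝ) : ℂ) *
          Complex.exp (Complex.I * ω * x))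
      linarith
  obtain ⟨T, hT, hTx⟩ := hcomp
  refine ⟨T, hT, √(1 / (2 * t1)), Real.sqrt_pos.2 (by positivity), fun x ρ hρ h => ?_⟩
  have hr : ∀ ω : ℝ, -ω ^ 2 / (2 * ρ ^ 2) = -(1 / (2 * ρ ^ 2)) * ω ^ 2 := fun ω => by ring
  simp_rw [hr]
  have ht : 0 ≤ 1 / (2 * ρ ^ 2) := by positivity
  by_cases hc : t1 ≤ 1 / (2 * ρ ^ 2)
  · exact hlarge _ hc x
  · rcases h with h | h
    · exact hTx _ ⟨ht, (not_le.1 hc).le⟩ ht x h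
    · exfalso; apply hc
      rw [Real.lt_sqrt hρ.le, lt_div_iff₀ (by positivity)] at h
      rw [le_div_iff₀ (by positivity)]
      linarith

lemma key2 (G : ℝ → ℂ) (hG : Integrable G) (ε : ℝ) (hε : 0 < ε) :
    ∃ T : ℝ, 0 < T ∧ ∃ Q : ℝ, 0 < Q ∧ ∀ x ρ : ℝ, 0 < ρ → (T < |x| ∨ ρ < Q) →
      ‖(1 / (2 * (Real.pi : ℂ))) * ∫ ω : ℝ, G ω * ((Real.exp (-ω ^ 2 / (2 * ρ ^ 2)) : ℝ) : ℂ) *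
        Complex.exp (Complex.I * ω * x)‖ < ε := by
  obtain ⟨T, hT, Q, hQ, h⟩ := key G hG ε hε
  refine ⟨T, hT, Q, hQ, fun x ρ hρ hh => lt_of_le_of_lt ?_ (h x ρ hρ hh)⟩
  rw [norm_mul]
  refine mul_le_of_le_one_left (norm_nonneg _) ?_
  have : (1 / (2 * (Real.pi : ℂ))) = ((1 / (2 * Real.pi) : ℝ) : ℂ) := by push_cast; rfl
  rw [this, Complex.norm_real, Real.norm_eq_abs, abs_of_pos (by positivity),
    div_le_one (by positivity)]
  linarith [Real.pi_gt_three]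

lemma F_bound (m : ℕ)
    (f : ℝ → ℂ) (hf : ContDiff ℝ m f)
    (hint : ∀ n ≤ m, Integrable (iteratedDeriv n f))
    (F : ℝ → ℂ) (hF : ∀ ω : ℝ, F ω = ∫ x : ℝ, f x * Complex.exp (-(Complex.I * ω * x))) :
    Continuous F ∧ ∀ n ≤ m, ∃ C : ℝ, ∀ ω, |ω| ^ n * ‖F ω‖ ≤ C := by
  have hFF : ∀ ω, F ω = 𝓕 f (ω / (2 * π)) := by
    intro ω
    rw [hF, Real.fourier_real_eq_integral_exp_smul]
    congr 1; ext x
    rw [smul_eq_mul, mul_comm]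
    congr 2
    have : (π : ℂ) ≠ 0 := by exact_mod_cast Real.pi_ne_zero
    push_cast
    field_simp
  have hf0 : Integrable f := by simpa using hint 0 (Nat.zero_le _)
  constructor
  · have hc : Continuous (𝓕 f) :=
      VectorFourier.fourierIntegral_continuous Real.continuous_fourierChar
        (by exact continuous_inner) hf0
    have : F = fun ω => 𝓕 f (ω / (2 * π)) := funext hFF
    rw [this]
    exact hc.comp (by fun_prop)
  · intro n hn
    refine ⟨∫ x, ‖iteratedDeriv n f x‖, fun ω => ?_⟩
    have h1 := congrFun (Real.fourier_iteratedDeriv (N := (m : ℕ∞)) (n := n) (by exact_mod_cast hf)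
      (fun k hk => hint k (by exact_mod_cast hk)) (by exact_mod_cast hn)) (ω / (2 * π))
    have h2 : ‖𝓕 (iteratedDeriv n f) (ω / (2 * π))‖ ≤ ∫ x, ‖iteratedDeriv n f x‖ :=
      VectorFourier.norm_fourierIntegral_le_integral_norm _ _ _ _ _
    rw [h1, ← hFF, norm_smul, norm_pow] at h2
    convert h2 using 3
    have : (2 * π * Complex.I * ((ω / (2 * π) : ℝ) : ℂ)) = Complex.I * ω := by
      have : (π : ℂ) ≠ 0 := by exact_mod_cast Real.pi_ne_zero
      push_cast
      field_simp
    rw [this]; simp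

lemma G_int (p : ℝ) (hp : 0 < p) (m : ℕ) (hm : (m : ℝ) > p + 2) (F : ℝ → ℂ)
    (hc : Continuous F) (hb : ∀ n ≤ m, ∃ C : ℝ, ∀ ω, |ω| ^ n * ‖F ω‖ ≤ C)
    (k : ℝ → ℂ) (hk : Measurable k) (hkb : ∀ ω, ‖k ω‖ ≤ 2 * |ω| ^ p) :
    Integrable (fun ω => F ω * k ω) := by
  obtain ⟨A, hA⟩ := hb 0 (Nat.zero_le _)
  obtain ⟨B, hB⟩ := hb m le_rfl
  simp only [pow_zero, one_mul] at hA
  have hA0 : 0 ≤ A := (norm_nonneg _).trans (hA 0)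
  have hB0 : 0 ≤ B := le_trans (by positivity) (hB 0)
  refine (integrable_inv_one_add_sq.const_mul (4 * (A + B))).mono'
    (hc.measurable.mul hk).aestronglyMeasurable (Eventually.of_forall fun ω => ?_)
  rw [← div_eq_mul_inv, le_div_iff₀ (by positivity), norm_mul]
  have h1 : ‖F ω‖ * ‖k ω‖ * (1 + ω ^ 2) ≤ ‖F ω‖ * (2 * |ω| ^ p) * (1 + ω ^ 2) := by
    gcongr; exact hkb ω
  refine h1.trans ?_
  rcases le_total |ω| 1 with h | h
  · have h3 : |ω| ^ p ≤ 1 := Real.rpow_le_one (abs_nonneg _) h hp.le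
    have h4 : ω ^ 2 ≤ 1 := by rw [← sq_abs]; exact pow_le_one₀ (abs_nonneg _) h
    calc ‖F ω‖ * (2 * |ω| ^ p) * (1 + ω ^ 2) ≤ A * (2 * 1) * (1 + 1) := by
          gcongr; exact hA ω
      _ ≤ _ := by linarith
  · have h4 : 1 ≤ ω ^ 2 := by rw [← sq_abs]; exact one_le_pow₀ h
    have h5 : |ω| ^ p * ω ^ 2 ≤ |ω| ^ m := by
      rw [← sq_abs, ← Real.rpow_natCast, ← Real.rpow_natCast,
        ← Real.rpow_add (lt_of_lt_of_le one_pos h)]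
      exact Real.rpow_le_rpow_of_exponent_le h (by push_cast; linarith)
    calc ‖F ω‖ * (2 * |ω| ^ p) * (1 + ω ^ 2) ≤ ‖F ω‖ * (2 * |ω| ^ p) * (ω ^ 2 + ω ^ 2) := by
          gcongr
      _ = 4 * ((|ω| ^ p * ω ^ 2) * ‖F ω‖) := by ring
      _ ≤ 4 * (|ω| ^ m * ‖F ω‖) := by gcongr
      _ ≤ 4 * B := by gcongr; exact hB ω
      _ ≤ _ := by linarith

/-- Essential localization: for `p > 0` and `m > p + 2`, for every `ε > 0` there are `T > 0` and
`Q > 0` such that `|φ^θ_p(x,ρ)| < ε` whenever `|x| > T` or `ρ < Q` (θ = e, o). -/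
theorem stmt_18 (p : ℝ) (hp : 0 < p) (m : ℕ) (hm : (m : ℝ) > p + 2)
    (f : ℝ → ℂ) (hf : ContDiff ℝ m f)
    (hint : ∀ n ≤ m, Integrable (iteratedDeriv n f))
    (F : ℝ → ℂ) (hF : ∀ ω : ℝ, F ω = ∫ x : ℝ, f x * Complex.exp (-(Complex.I * ω * x))) :
    ∀ ε : ℝ, 0 < ε → ∃ T : ℝ, 0 < T ∧ ∃ Q : ℝ, 0 < Q ∧
      ∀ x ρ : ℝ, 0 < ρ → (T < |x| ∨ ρ < Q) →
        ‖phiE F p x ρ‖ < ε ∧ ‖phiO F p x ρ‖ < ε := by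
  intro ε hε
  obtain ⟨hc, hb⟩ := F_bound m f hf hint F hF
  have n1 : ∀ ω : ℝ, ‖(Complex.I * ω) ^ (p : ℂ)‖ = |ω| ^ p := fun ω => by
    rw [Complex.norm_cpow_real]; simp
  have n2 : ∀ ω : ℝ, ‖(-(Complex.I * ω)) ^ (p : ℂ)‖ = |ω| ^ p := fun ω => by
    rw [Complex.norm_cpow_real]; simp
  have hE := G_int p hp m hm F hc hb (kerE p) (by unfold kerE; fun_prop) (fun ω => by
    refine (norm_add_le _ _).trans (le_of_eq ?_)
    rw [n1, n2]; ring)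
  have hO := G_int p hp m hm F hc hb (kerO p) (by unfold kerO; fun_prop) (fun ω => by
    refine (norm_sub_le _ _).trans (le_of_eq ?_)
    rw [n1, n2]; ring)
  obtain ⟨T, hT, Q, hQ, h⟩ := key2 _ hE ε hε
  obtain ⟨T', hT', Q', hQ', h'⟩ := key2 _ hO ε hε
  refine ⟨max T T', lt_max_of_lt_left hT, min Q Q', lt_min hQ hQ', fun x ρ hρ hh => ⟨?_, ?_⟩⟩
  · exact h x ρ hρ (hh.imp (lt_of_le_of_lt (le_max_left _ _))
      (fun a => lt_of_lt_of_le a (min_le_left _ _)))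
  · exact h' x ρ hρ (hh.imp (lt_of_le_of_lt (le_max_right _ _))
      (fun a => lt_of_lt_of_le a (min_le_right _ _)))
end
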